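/- arXiv:2512.00386 — 4 statements merged into one kernel-verified Lean document; each statement's English description precedes it below -/
import Mathlib

section
/- Let f : ℝ^d → ℝ be differentiable and m-strongly convex with m > 0, and suppose ∇f is continuous. Let w : [0,∞) → ℝ^d be any function, and let u, v : [0,∞) → ℝ^d be continuous paths satisfying u(t) = u(0) + w(t) − ∫₀ᵗ ∇f(u(s)) ds and v(t) = v(0) + w(t) − ∫₀ᵗ ∇f(v(s)) ds for all t ≥ 0 (with the same w). Then ‖u(t) − v(t)‖ ≤ e^{−mt}·‖u(0) − v(0)‖ for all t ≥ 0. -/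
open Metric RealInnerProductSpace

/-! The driving path cancels in `z = u - v`, so `z` is differentiable even though `u` and `v` need
not be, with `z' = -(∇f(u) - ∇f(v))`. Strong convexity makes `∇f` strongly monotone, hence
`(‖z‖²)' = 2⟪z, z'⟫ ≤ -2m‖z‖²`, and Grönwall's inequality gives `‖z t‖² ≤ e^{-2mt} ‖z 0‖²`. -/

open Set MeasureTheory

theorem le_mul_exp_of_deriv_right_le_mul {φ φ' : ℝ → ℝ} {K a b : ℝ} (hφ : ContinuousOn φ (Icc a b))
    (hφ' : ∀ t ∈ Ico a b, HasDerivWithinAt φ (φ' t) (Ici t) t)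
    (hle : ∀ t ∈ Ico a b, φ' t ≤ K * φ t) {t : ℝ} (ht : t ∈ Icc a b) :
    φ t ≤ φ a * Real.exp (K * (t - a)) := by
  rw [← gronwallBound_ε0]
  exact le_gronwallBound_of_liminf_deriv_right_le hφ
    (fun s hs _ hr => (hφ' s hs).liminf_right_slope_le hr) le_rfl
    (fun s hs => (hle s hs).trans_eq (add_zero _).symm) t ht

theorem hasDerivWithinAt_Ici_of_eq_add_integral {E : Type*} [NormedAddCommGroup E]
    [NormedSpace ℝ E] [CompleteSpace E] {z g : ℝ → E} {c : E} {a t : ℝ}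
    (hg : ContinuousOn g (Ici a)) (hz : ∀ s ≥ a, z s = c + ∫ r in a..s, g r) (ht : a ≤ t) :
    HasDerivWithinAt z (g t) (Ici t) t := by
  have hint : IntervalIntegrable g volume a t :=
    (hg.mono Icc_subset_Ici_self).intervalIntegrable_of_Icc ht
  have hgt : ContinuousOn g (Ici t) := hg.mono (Ici_subset_Ici.2 ht)
  have hderiv : HasDerivWithinAt (fun s => ∫ r in a..s, g r) (g t) (Ici t) t :=
    intervalIntegral.integral_hasDerivWithinAt_right hint
      ((hgt.mono Ioi_subset_Ici_self).stronglyMeasurableAtFilter_nhdsWithin measurableSet_Ioi t)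
      ((hgt t self_mem_Ici).mono Ioi_subset_Ici_self)
  exact (hderiv.const_add c).congr (fun s hs => hz s (ht.trans hs)) (hz t ht)

section InnerProductSpace

variable {E : Type*} [NormedAddCommGroup E] [InnerProductSpace ℝ E]

theorem norm_le_exp_mul_of_inner_deriv_right_le {z z' : ℝ → E} {K a b : ℝ}
    (hz : ContinuousOn z (Icc a b))
    (hz' : ∀ t ∈ Ico a b, HasDerivWithinAt z (z' t) (Ici t) t)
    (hle : ∀ t ∈ Ico a b, ⟪z t, z' t⟫ ≤ K * ‖z t‖ ^ 2) {t : ℝ} (ht : t ∈ Icc a b) :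
    ‖z t‖ ≤ Real.exp (K * (t - a)) * ‖z a‖ := by
  have hsq : ‖z t‖ ^ 2 ≤ ‖z a‖ ^ 2 * Real.exp (2 * K * (t - a)) :=
    le_mul_exp_of_deriv_right_le_mul (hz.norm.pow 2) (fun s hs => (hz' s hs).norm_sq)
      (fun s hs => by simp only [Pi.pow_apply]; linarith [hle s hs]) ht
  refine le_of_sq_le_sq ?_ (by positivity)
  calc ‖z t‖ ^ 2 ≤ ‖z a‖ ^ 2 * Real.exp (2 * K * (t - a)) := hsq
    _ = (Real.exp (K * (t - a)) * ‖z a‖) ^ 2 := by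
      rw [mul_pow, ← Real.exp_nat_mul, mul_comm, Nat.cast_ofNat, mul_assoc]

/-- Strong monotonicity of a vector field with constant `m`, the property of the drift from which
the contraction rate is read off. The constant may have either sign: for `m < 0` this is a
one-sided Lipschitz condition on `-g`. -/
def StronglyMonotone (m : ℝ) (g : E → E) : Prop :=
  ∀ x y, m * ‖x - y‖ ^ 2 ≤ ⟪x - y, g x - g y⟫

theorem stronglyMonotone_of_quadratic_lower_bound {m : ℝ} {f : E → ℝ} {g : E → E}
    (h : ∀ x y, f x + ⟪g x, y - x⟫ + m / 2 * ‖y - x‖ ^ 2 ≤ f y) : StronglyMonotone m g := by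
  intro x y
  have hxy := h x y
  have hyx := h y x
  rw [← neg_sub x y, inner_neg_right, norm_neg] at hxy
  rw [real_inner_comm, inner_sub_left]
  linarith

theorem synchronous_coupling_contraction_general [CompleteSpace E] {m : ℝ} {g : E → E}
    (hg : Continuous g) (hmono : StronglyMonotone m g) {w u v : ℝ → E}
    (hu : ContinuousOn u (Ici 0)) (hv : ContinuousOn v (Ici 0))
    (hueq : ∀ t ≥ (0 : ℝ), u t = u 0 + w t - ∫ s in (0 : ℝ)..t, g (u s))
    (hveq : ∀ t ≥ (0 : ℝ), v t = v 0 + w t - ∫ s in (0 : ℝ)..t, g (v s)) {t : ℝ} (ht : 0 ≤ t) :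
    ‖u t - v t‖ ≤ Real.exp (-m * t) * ‖u 0 - v 0‖ := by
  have hgu : ContinuousOn (fun s => g (u s)) (Ici 0) := hg.comp_continuousOn hu
  have hgv : ContinuousOn (fun s => g (v s)) (Ici 0) := hg.comp_continuousOn hv
  have hsub : ∀ s ≥ (0 : ℝ),
      u s - v s = u 0 - v 0 + ∫ r in (0 : ℝ)..s, (g (v r) - g (u r)) := fun s hs =>
    calc u s - v s
      _ = (u 0 + w s - ∫ r in (0 : ℝ)..s, g (u r)) - (v 0 + w s - ∫ r in (0 : ℝ)..s, g (v r)) :=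
        congrArg₂ (· - ·) (hueq s hs) (hveq s hs)
      _ = u 0 - v 0 + ((∫ r in (0 : ℝ)..s, g (v r)) - ∫ r in (0 : ℝ)..s, g (u r)) := by abel
      _ = u 0 - v 0 + ∫ r in (0 : ℝ)..s, (g (v r) - g (u r)) := by
        rw [intervalIntegral.integral_sub
          ((hgv.mono Icc_subset_Ici_self).intervalIntegrable_of_Icc hs)
          ((hgu.mono Icc_subset_Ici_self).intervalIntegrable_of_Icc hs)]
  have hdiss : ∀ s, ⟪u s - v s, g (v s) - g (u s)⟫ ≤ -m * ‖u s - v s‖ ^ 2 := fun s => by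
    rw [← neg_sub (g (u s)), inner_neg_right, neg_mul]
    exact neg_le_neg (hmono (u s) (v s))
  simpa only [sub_zero] using norm_le_exp_mul_of_inner_deriv_right_le
    (z := fun s => u s - v s) ((hu.sub hv).mono Icc_subset_Ici_self)
    (fun s hs => hasDerivWithinAt_Ici_of_eq_add_integral (hgv.sub hgu) hsub hs.1)
    (fun s _ => hdiss s) (right_mem_Icc.2 ht)

end InnerProductSpace

/-- Pathwise synchronous-coupling contraction: two solutions of the ODE/SDE
`x(t) = x(0) + w(t) - ∫₀ᵗ ∇f(x(s)) ds` driven by the same path `w`, with `f`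
`m`-strongly convex, contract at exponential rate `e^{-mt}`. -/
theorem synchronous_coupling_contraction
    {d : ℕ} (m : ℝ) (hm : 0 < m)
    (f : EuclideanSpace ℝ (Fin d) → ℝ) (hf : Differentiable ℝ f)
    (hfsc : ∀ x y : EuclideanSpace ℝ (Fin d),
      f y ≥ f x + ⟪gradient f x, y - x⟫ + m / 2 * ‖y - x‖ ^ 2)
    (hfgrad : Continuous (gradient f))
    (w u v : ℝ → EuclideanSpace ℝ (Fin d))
    (hu : ContinuousOn u (Set.Ici 0)) (hv : ContinuousOn v (Set.Ici 0))
    (hueq : ∀ t ≥ (0 : ℝ), u t = u 0 + w t - ∫ s in (0 : ℝ)..t, gradient f (u s))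
    (hveq : ∀ t ≥ (0 : ℝ), v t = v 0 + w t - ∫ s in (0 : ℝ)..t, gradient f (v s)) :
    ∀ t ≥ (0 : ℝ), ‖u t - v t‖ ≤ Real.exp (-m * t) * ‖u 0 - v 0‖ := by
  intro t ht
  exact synchronous_coupling_contraction_general hfgrad
    (stronglyMonotone_of_quadratic_lower_bound hfsc) hu hv hueq hveq ht
end

section
/- Let D be a nonempty closed convex subset of ℝ^d, let g : ℝ^d → ℝ be continuous and m-strongly convex with m > 0, let σ > 0, and for n ≥ 1 set f_n(x) = g(x) + (n/2)·dist(x,D)² and Z^n = ∫_{ℝ^d} exp(−(2/σ²)f_n(x)) dx. Then lim_{n→∞} Z^n = ∫_D exp(−(2/σ²)·g(x)) dx. -/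
open MeasureTheory Metric Filter

/-!
A strongly convex potential is a convex function plus a positive multiple of `‖x‖²`. An affine
minorant of the convex part bounds the Gibbs density by an integrable Gaussian. Writing
`exp (-t * f_n) = exp (-(t * n / 2) * dist(·, D)²) * exp (-t * g)`, the claim becomes the fact that
`∫ exp (-s * p) • f` converges, as `s → ∞`, to the integral of `f` over the zero set of `p ≥ 0`.
-/

section GibbsIntegrability

lemma exists_affine_le_of_convexOn_univ {E : Type*} [NormedAddCommGroup E] [NormedSpace ℝ E]
    [FiniteDimensional ℝ E] {h : E → ℝ} (hh : ConvexOn ℝ Set.univ h) :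
    ∃ (l : E →L[ℝ] ℝ) (c : ℝ), ∀ x, l x + c ≤ h x := by
  obtain ⟨l, c, hlc, -⟩ := hh.exists_affine_le_of_lt (𝕜 := ℝ) (Set.mem_univ 0)
    (sub_one_lt (h 0)) isClosed_univ
    (hh.locallyLipschitz.continuous.lowerSemicontinuous.lowerSemicontinuousOn _)
  exact ⟨l, c, fun x ↦ hlc ⟨x, Set.mem_univ x⟩⟩

variable {V : Type*} [NormedAddCommGroup V] [InnerProductSpace ℝ V] [FiniteDimensional ℝ V]
  [MeasurableSpace V] [BorelSpace V]

lemma integrable_exp_neg_mul_sq_norm_add_clm {b : ℝ} (hb : 0 < b) (l : V →L[ℝ] ℝ) :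
    Integrable fun x ↦ Real.exp (-b * ‖x‖ ^ 2 + l x) := by
  obtain ⟨w, rfl⟩ := (InnerProductSpace.toDual ℝ V).surjective l
  refine (GaussianFourier.integrable_cexp_neg_mul_sq_norm_add (b := (b : ℂ)) (by simpa using hb)
    1 w).norm.congr (.of_forall fun x ↦ ?_)
  simp only [Complex.norm_exp, InnerProductSpace.toDual_apply_apply, one_mul]
  norm_cast

lemma integrable_exp_neg_mul_sq_norm_sub_of_convexOn {b : ℝ} (hb : 0 < b) {h : V → ℝ}
    (hh : ConvexOn ℝ Set.univ h) : Integrable fun x ↦ Real.exp (-b * ‖x‖ ^ 2 - h x) := by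
  have hcont : Continuous h := hh.locallyLipschitz.continuous
  obtain ⟨l, c, hlc⟩ := exists_affine_le_of_convexOn_univ hh
  refine ((integrable_exp_neg_mul_sq_norm_add_clm hb (-l)).mul_const (Real.exp (-c))).mono'
    (by fun_prop) (.of_forall fun x ↦ ?_)
  rw [Real.norm_eq_abs, Real.abs_exp, ← Real.exp_add, Real.exp_le_exp, neg_apply]
  linarith [hlc x]

lemma integrable_exp_neg_mul_of_strongConvexOn {m t : ℝ} (hm : 0 < m) (ht : 0 < t) {g : V → ℝ}
    (hg : StrongConvexOn Set.univ m g) : Integrable fun x ↦ Real.exp (-t * g x) := by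
  have hconv : ConvexOn ℝ Set.univ fun x ↦ t * (g x - m / 2 * ‖x‖ ^ 2) :=
    (strongConvexOn_iff_convex.1 hg).smul ht.le
  refine (integrable_exp_neg_mul_sq_norm_sub_of_convexOn (b := t * (m / 2)) (by positivity)
    hconv).congr (.of_forall fun x ↦ ?_)
  ring_nf

end GibbsIntegrability

section ExponentialPenalty

variable {X E : Type*} [NormedAddCommGroup E] [NormedSpace ℝ E]

lemma tendsto_exp_neg_mul_smul_indicator {p : X → ℝ} {x : X} (hp : 0 ≤ p x) (f : X → E) :
    Tendsto (fun s : ℝ ↦ Real.exp (-(s * p x)) • f x) atTop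
      (nhds ({y | p y = 0}.indicator f x)) := by
  obtain hpx | hpx := hp.eq_or_lt
  · simp [← hpx]
  · have hlim : Tendsto (fun s : ℝ ↦ Real.exp (-(s * p x))) atTop (nhds 0) :=
      Real.tendsto_exp_neg_atTop_nhds_zero.comp (tendsto_id.atTop_mul_const hpx)
    simpa [hpx.ne'] using hlim.smul_const (f x)

lemma tendsto_integral_exp_neg_mul_smul [MeasurableSpace X] {μ : Measure X} {p : X → ℝ} {f : X → E}
    (hpm : AEMeasurable p μ) (hp : 0 ≤ᵐ[μ] p) (hf : Integrable f μ) :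
    Tendsto (fun s : ℝ ↦ ∫ x, Real.exp (-(s * p x)) • f x ∂μ) atTop
      (nhds (∫ x in {x | p x = 0}, f x ∂μ)) := by
  have hzero : NullMeasurableSet {x | p x = 0} μ :=
    hpm.nullMeasurableSet_preimage (measurableSet_singleton 0)
  rw [← integral_indicator₀ hzero]
  refine tendsto_integral_filter_of_dominated_convergence (fun x ↦ ‖f x‖) (.of_forall fun s ↦ ?_)
    ?_ hf.norm (hp.mono fun x hpx ↦ tendsto_exp_neg_mul_smul_indicator hpx f)
  · exact (hpm.const_mul s).neg.exp.aestronglyMeasurable.smul hf.aestronglyMeasurable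
  · filter_upwards [eventually_ge_atTop (0 : ℝ)] with s hs
    filter_upwards [hp] with x hpx
    have hexp : Real.exp (-(s * p x)) ≤ 1 :=
      Real.exp_le_one_iff.2 (neg_nonpos.2 (mul_nonneg hs hpx))
    rw [norm_smul, Real.norm_eq_abs, Real.abs_exp]
    exact mul_le_of_le_one_left (norm_nonneg _) hexp

end ExponentialPenalty

theorem penalized_normalizing_constants_tendsto_general {X : Type*} [PseudoMetricSpace X]
    [MeasurableSpace X] [OpensMeasurableSpace X] {μ : Measure X} {D : Set X} (hD : D.Nonempty)
    {g : X → ℝ} {t : ℝ} (ht : 0 < t) (hg : Integrable (fun x ↦ Real.exp (-t * g x)) μ) :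
    Tendsto (fun n : ℕ ↦ ∫ x, Real.exp (-t * (g x + (n : ℝ) / 2 * infDist x D ^ 2)) ∂μ) atTop
      (nhds (∫ x in closure D, Real.exp (-t * g x) ∂μ)) := by
  have hzero : {x | infDist x D ^ 2 = 0} = closure D :=
    Set.ext fun x ↦ sq_eq_zero_iff.trans (mem_closure_iff_infDist_zero hD).symm
  have hscale : Tendsto (fun n : ℕ ↦ t * ((n : ℝ) / 2)) atTop atTop :=
    (tendsto_natCast_atTop_atTop.atTop_div_const two_pos).const_mul_atTop ht
  have hlim := (tendsto_integral_exp_neg_mul_smul (p := fun x ↦ infDist x D ^ 2)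
    (measurable_infDist.pow_const 2).aemeasurable (.of_forall fun x ↦ sq_nonneg _) hg).comp hscale
  rw [hzero] at hlim
  refine hlim.congr fun n ↦ integral_congr_ae (.of_forall fun x ↦ ?_)
  simp only [smul_eq_mul, ← Real.exp_add]
  ring_nf

/-- Convergence of the Gibbs normalizing constants: under strong convexity of
`g`, `Z^n = ∫ exp(−(2/σ²) f_n) dx` converges to `∫_D exp(−(2/σ²) g) dx`. -/
theorem penalized_normalizing_constants_tendsto
    {d : ℕ} (D : Set (EuclideanSpace ℝ (Fin d)))
    (hDne : D.Nonempty) (hDclosed : IsClosed D) (hDconv : Convex ℝ D)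
    (g : EuclideanSpace ℝ (Fin d) → ℝ) (hgc : Continuous g)
    (m : ℝ) (hm : 0 < m) (hgsc : StrongConvexOn Set.univ m g)
    (σ : ℝ) (hσ : 0 < σ)
    (fn : ℕ → EuclideanSpace ℝ (Fin d) → ℝ)
    (hfn : ∀ n x, fn n x = g x + (n : ℝ) / 2 * (infDist x D) ^ 2)
    (Z : ℕ → ℝ)
    (hZ : ∀ n, Z n = ∫ x : EuclideanSpace ℝ (Fin d), Real.exp (-(2 / σ ^ 2) * fn n x)) :
    Tendsto Z atTop
      (nhds (∫ x in D, Real.exp (-(2 / σ ^ 2) * g x))) := by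
  obtain rfl : Z = _ := funext hZ
  have ht : 0 < 2 / σ ^ 2 := by positivity
  simpa only [hfn, hDclosed.closure_eq] using penalized_normalizing_constants_tendsto_general hDne
    ht (integrable_exp_neg_mul_of_strongConvexOn hm ht hgsc)
end

section
/- Let D be a nonempty closed convex subset of ℝ^d with nonempty interior, let g : ℝ^d → ℝ be continuous and m-strongly convex with m > 0, let σ > 0, and for n ≥ 1 let π^n be the probability measure with Lebesgue density exp(−(2/σ²)f_n)/Z^n, where f_n(x) = g(x) + (n/2)·dist(x,D)² and Z^n = ∫ exp(−(2/σ²)f_n) dx. Then for every ε > 0 there exists a constant C = C(ε, g, D, σ) < ∞, independent of n, such that π^n({x ∈ ℝ^d : dist(x,D) ≥ ε}) ≤ C·exp(−n·ε²/σ²) for all n ≥ 1. In particular, the mass assigned by π^n to the complement of any ε-neighborhood of D tends to 0 exponentially fast in n. -/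
open MeasureTheory Metric

/-!
With `h = dist(·, D)²`, the measure `π^n` is the exponential tilt by `-(n/σ²) h` of the single
probability measure `ν` with density proportional to `exp(-(2/σ²) g)`. The weight `exp(-t h)` is
at most `exp(-t ε²)` where `dist(·, D) ≥ ε` and equals `1` on `closure D`, so
`π^n {dist(·, D) ≥ ε} ≤ exp(-n ε²/σ²) / ν (closure D)`. Strong convexity is what makes
`exp(-(2/σ²) g)` integrable: `g - (m/2)‖·‖²` is convex, hence has an affine minorant, so
`exp(-(2/σ²) g)` is dominated by a Gaussian.
-/

section StrongConvexity

variable {E : Type*} [NormedAddCommGroup E] [InnerProductSpace ℝ E] {g : E → ℝ} {m : ℝ}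

theorem exists_quadratic_minorant_of_strongConvexOn_univ (hgc : LowerSemicontinuous g)
    (hg : StrongConvexOn Set.univ m g) :
    ∃ (l : E →L[ℝ] ℝ) (c : ℝ), ∀ x, m / 2 * ‖x‖ ^ 2 + l x + c ≤ g x := by
  have hlsc : LowerSemicontinuous fun x ↦ g x - m / 2 * ‖x‖ ^ 2 := by
    simpa only [sub_eq_add_neg] using
      hgc.add (by fun_prop : Continuous fun x : E ↦ -(m / 2 * ‖x‖ ^ 2)).lowerSemicontinuous
  obtain ⟨l, c, hle, -⟩ := (strongConvexOn_iff_convex.1 hg).exists_affine_le_of_lt (𝕜 := ℝ)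
    (Set.mem_univ 0) (sub_one_lt _) isClosed_univ (lowerSemicontinuousOn_univ_iff.2 hlsc)
  refine ⟨l, c, fun x ↦ ?_⟩
  have hx : l x + c ≤ g x - m / 2 * ‖x‖ ^ 2 := hle ⟨x, Set.mem_univ x⟩
  linarith

variable [FiniteDimensional ℝ E]

theorem continuous_of_strongConvexOn_univ (hg : StrongConvexOn Set.univ m g) : Continuous g := by
  have hconv := strongConvexOn_iff_convex.1 hg
  have hcont : Continuous fun x ↦ g x - m / 2 * ‖x‖ ^ 2 :=
    continuousOn_univ.1 (hconv.continuousOn isOpen_univ)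
  simpa only [Pi.add_def, sub_add_cancel] using
    hcont.add (by fun_prop : Continuous fun x : E ↦ m / 2 * ‖x‖ ^ 2)

variable [MeasurableSpace E] [BorelSpace E]

theorem integrable_exp_neg_mul_sq_norm_add {b : ℝ} (hb : 0 < b) (l : E →L[ℝ] ℝ) :
    Integrable fun x ↦ Real.exp (-b * ‖x‖ ^ 2 + l x) := by
  have := FiniteDimensional.complete ℝ E
  obtain ⟨w, rfl⟩ := (InnerProductSpace.toDual ℝ E).surjective l
  have hgauss := (GaussianFourier.integrable_cexp_neg_mul_sq_norm_add
    (b := (b : ℂ)) (by simpa using hb) 1 w).norm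
  refine hgauss.congr (Filter.Eventually.of_forall fun x ↦ ?_)
  simp only [Complex.norm_exp, one_mul, InnerProductSpace.toDual_apply_apply]
  norm_cast

theorem integrable_exp_neg_mul_of_strongConvexOn_univ {β : ℝ} (hβ : 0 < β) (hm : 0 < m)
    (hg : StrongConvexOn Set.univ m g) :
    Integrable fun x ↦ Real.exp (-β * g x) := by
  have hgc := continuous_of_strongConvexOn_univ hg
  obtain ⟨l, c, hle⟩ := exists_quadratic_minorant_of_strongConvexOn_univ hgc.lowerSemicontinuous hg
  have hgauss := integrable_exp_neg_mul_sq_norm_add (b := β * (m / 2)) (by positivity) (-β • l)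
  refine (hgauss.mul_const (Real.exp (-β * c))).mono' (by fun_prop)
    (Filter.Eventually.of_forall fun x ↦ ?_)
  rw [Real.norm_eq_abs, Real.abs_exp, ← Real.exp_add, Real.exp_le_exp]
  calc -β * g x ≤ -β * (m / 2 * ‖x‖ ^ 2 + l x + c) :=
        mul_le_mul_of_nonpos_left (hle x) (neg_nonpos.2 hβ.le)
    _ = -(β * (m / 2)) * ‖x‖ ^ 2 + (-β • l) x + -β * c := by
        simp only [smul_apply, smul_eq_mul]; ring

end StrongConvexity

section Tilted

variable {α : Type*} [MeasurableSpace α] {μ : Measure α} {f : α → ℝ} {s s' : Set α} {a b : ℝ}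

theorem tilted_apply_le_of_forall_le (hs : MeasurableSet s) (hf : ∀ x ∈ s, f x ≤ a) :
    μ.tilted f s ≤ ENNReal.ofReal (Real.exp a / ∫ x, Real.exp (f x) ∂μ) * μ s := by
  rw [tilted_apply' μ f hs, ← setLIntegral_const]
  refine setLIntegral_mono' hs fun x hx ↦ ENNReal.ofReal_le_ofReal ?_
  gcongr
  exact hf x hx

theorem exp_mul_measure_le_integral_exp (hint : Integrable (fun x ↦ Real.exp (f x)) μ)
    (hf : ∀ x ∈ s, a ≤ f x) :
    ENNReal.ofReal (Real.exp a) * μ s ≤ ENNReal.ofReal (∫ x, Real.exp (f x) ∂μ) := by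
  calc ENNReal.ofReal (Real.exp a) * μ s
      ≤ ENNReal.ofReal (Real.exp a) *
          μ {x | ENNReal.ofReal (Real.exp a) ≤ ENNReal.ofReal (Real.exp (f x))} := by
        gcongr
        exact fun x hx ↦ ENNReal.ofReal_le_ofReal (Real.exp_le_exp.2 (hf x hx))
    _ ≤ ∫⁻ x, ENNReal.ofReal (Real.exp (f x)) ∂μ :=
        mul_meas_ge_le_lintegral₀ hint.aemeasurable.ennreal_ofReal _
    _ = ENNReal.ofReal (∫ x, Real.exp (f x) ∂μ) :=
        (ofReal_integral_eq_lintegral_ofReal hint (ae_of_all _ fun x ↦ (Real.exp_pos _).le)).symm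

theorem tilted_apply_le_exp_sub_mul_div (hs : MeasurableSet s) (hfs : ∀ x ∈ s, f x ≤ a)
    (hfs' : ∀ x ∈ s', b ≤ f x) :
    μ.tilted f s ≤ ENNReal.ofReal (Real.exp (a - b)) * μ s / μ s' := by
  by_cases hint : Integrable (fun x ↦ Real.exp (f x)) μ
  swap
  · simp [hint]
  calc μ.tilted f s
      ≤ ENNReal.ofReal (Real.exp a / ∫ x, Real.exp (f x) ∂μ) * μ s :=
        tilted_apply_le_of_forall_le hs hfs
    _ ≤ ENNReal.ofReal (Real.exp a) * μ s / ENNReal.ofReal (∫ x, Real.exp (f x) ∂μ) := by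
        rw [ENNReal.mul_div_right_comm]
        gcongr
        exact ENNReal.ofReal_div_le (by positivity)
    _ ≤ ENNReal.ofReal (Real.exp a) * μ s / (ENNReal.ofReal (Real.exp b) * μ s') := by
        gcongr
        exact exp_mul_measure_le_integral_exp hint hfs'
    _ = ENNReal.ofReal (Real.exp b) * (ENNReal.ofReal (Real.exp (a - b)) * μ s) /
          (ENNReal.ofReal (Real.exp b) * μ s') := by
        rw [← mul_assoc, ← ENNReal.ofReal_mul (Real.exp_pos b).le, ← Real.exp_add,
          add_sub_cancel]
    _ = ENNReal.ofReal (Real.exp (a - b)) * μ s / μ s' :=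
        ENNReal.mul_div_mul_left _ _ (ENNReal.ofReal_pos.2 (Real.exp_pos b)).ne'
          ENNReal.ofReal_ne_top

end Tilted

section PenalizedDistance

variable {X : Type*} [PseudoMetricSpace X] [MeasurableSpace X] [OpensMeasurableSpace X]
  {μ : Measure X} {D : Set X} {g : X → ℝ} {β : ℝ}

theorem tilted_infDist_penalty_le (hβ : 0 ≤ β)
    (hg : Integrable (fun x ↦ Real.exp (-β * g x)) μ) {ε t : ℝ} (hε : 0 ≤ ε) (ht : 0 ≤ t) :
    μ.tilted (fun x ↦ -β * (g x + t / 2 * infDist x D ^ 2)) {x | ε ≤ infDist x D} ≤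
      ENNReal.ofReal (Real.exp (-β * (t / 2 * ε ^ 2))) /
        μ.tilted (fun x ↦ -β * g x) (closure D) := by
  set ν := μ.tilted fun x ↦ -β * g x
  have htilt : μ.tilted (fun x ↦ -β * (g x + t / 2 * infDist x D ^ 2)) =
      ν.tilted fun x ↦ -β * (t / 2 * infDist x D ^ 2) := by
    rw [tilted_tilted hg]
    simp only [mul_add, Pi.add_def]
  have hmeas : MeasurableSet {x | ε ≤ infDist x D} :=
    measurableSet_le measurable_const (by fun_prop)
  have hfar : ∀ x ∈ {x | ε ≤ infDist x D},
      -β * (t / 2 * infDist x D ^ 2) ≤ -β * (t / 2 * ε ^ 2) := fun x hx ↦ by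
    refine mul_le_mul_of_nonpos_left ?_ (neg_nonpos.2 hβ)
    gcongr
    exact hx
  have hclosure : ∀ x ∈ closure D, 0 ≤ -β * (t / 2 * infDist x D ^ 2) := fun x hx ↦ by
    simp [infDist_zero_of_mem_closure hx]
  calc μ.tilted (fun x ↦ -β * (g x + t / 2 * infDist x D ^ 2)) {x | ε ≤ infDist x D}
      ≤ ENNReal.ofReal (Real.exp (-β * (t / 2 * ε ^ 2) - 0)) *
          ν {x | ε ≤ infDist x D} / ν (closure D) := by
        rw [htilt]
        exact tilted_apply_le_exp_sub_mul_div hmeas hfar hclosure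
    _ ≤ ENNReal.ofReal (Real.exp (-β * (t / 2 * ε ^ 2))) / ν (closure D) := by
        rw [sub_zero]
        gcongr
        exact mul_le_of_le_one_right' prob_le_one

theorem penalized_gibbs_concentration_general (hβ : 0 ≤ β) (hD : μ (closure D) ≠ 0)
    (hg : Integrable (fun x ↦ Real.exp (-β * g x)) μ) :
    ∃ C : ℝ, ∀ ε t : ℝ, 0 ≤ ε → 0 ≤ t →
      μ.tilted (fun x ↦ -β * (g x + t / 2 * infDist x D ^ 2)) {x | ε ≤ infDist x D} ≤
        ENNReal.ofReal (C * Real.exp (-β * (t / 2 * ε ^ 2))) := by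
  set ν := μ.tilted fun x ↦ -β * g x
  have hν : ν (closure D) ≠ 0 := fun h ↦ hD (absolutelyContinuous_tilted hg h)
  refine ⟨(ν (closure D))⁻¹.toReal, fun ε t hε ht ↦ ?_⟩
  rw [ENNReal.ofReal_mul ENNReal.toReal_nonneg, ENNReal.ofReal_toReal (ENNReal.inv_ne_top.2 hν),
    mul_comm, ← div_eq_mul_inv]
  exact tilted_infDist_penalty_le hβ hg hε ht

end PenalizedDistance

/-- Exponential concentration of the penalized Gibbs measures near `D`: for
every `ε > 0` there is a constant `C`, independent of `n`, such that
`π^n({dist(·,D) ≥ ε}) ≤ C·exp(−n ε²/σ²)` for all `n ≥ 1`. -/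
theorem penalized_gibbs_concentration
    {d : ℕ} (D : Set (EuclideanSpace ℝ (Fin d)))
    (hDne : D.Nonempty) (hDclosed : IsClosed D) (hDconv : Convex ℝ D)
    (hDint : (interior D).Nonempty)
    (g : EuclideanSpace ℝ (Fin d) → ℝ) (hgc : Continuous g)
    (m : ℝ) (hm : 0 < m) (hgsc : StrongConvexOn Set.univ m g)
    (σ : ℝ) (hσ : 0 < σ)
    (fn : ℕ → EuclideanSpace ℝ (Fin d) → ℝ)
    (hfn : ∀ n x, fn n x = g x + (n : ℝ) / 2 * (infDist x D) ^ 2)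
    (Z : ℕ → ℝ)
    (hZ : ∀ n, Z n = ∫ x : EuclideanSpace ℝ (Fin d), Real.exp (-(2 / σ ^ 2) * fn n x))
    (π : ℕ → Measure (EuclideanSpace ℝ (Fin d)))
    (hπ : ∀ n, π n = volume.withDensity
      (fun x => ENNReal.ofReal (Real.exp (-(2 / σ ^ 2) * fn n x) / Z n))) :
    ∀ ε : ℝ, 0 < ε → ∃ C : ℝ, ∀ n : ℕ, 1 ≤ n →
      π n {x | ε ≤ infDist x D} ≤
        ENNReal.ofReal (C * Real.exp (-(n : ℝ) * ε ^ 2 / σ ^ 2)) := by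
  intro ε hε
  have hD : volume (closure D) ≠ 0 := ((Measure.measure_pos_of_nonempty_interior volume
    hDint).trans_le (measure_mono subset_closure)).ne'
  obtain ⟨C, hC⟩ := penalized_gibbs_concentration_general (by positivity) hD
    (integrable_exp_neg_mul_of_strongConvexOn_univ (β := 2 / σ ^ 2) (by positivity) hm hgsc)
  refine ⟨C, fun n _ ↦ ?_⟩
  have hrate : -(n : ℝ) * ε ^ 2 / σ ^ 2 = -(2 / σ ^ 2) * (n / 2 * ε ^ 2) := by ring
  simpa only [hπ, hZ, hfn, hrate, Measure.tilted] using hC ε n hε.le n.cast_nonneg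
end

section
/- Let D be a nonempty closed convex subset of ℝ^d with nonempty interior, let g : ℝ^d → ℝ be continuous and m-strongly convex with m > 0, let σ > 0, and for n ≥ 1 let π^n be the probability measure with Lebesgue density exp(−(2/σ²)f_n)/Z^n, where f_n(x) = g(x) + (n/2)·dist(x,D)² and Z^n = ∫ exp(−(2/σ²)f_n) dx. Let π be the probability measure with Lebesgue density exp(−(2/σ²)g)·1_D/Z_D, where Z_D = ∫_D exp(−(2/σ²)g) dx. Then the second moments converge: ∫_{ℝ^d} ‖x‖² dπ^n(x) → ∫_{ℝ^d} ‖x‖² dπ(x) as n → ∞. -/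
open MeasureTheory Metric Filter

open scoped Topology

/-!
Up to normalisation, the penalized measure at level `n` has density `exp (-n φ)` with respect to the
unpenalized Gibbs measure, where the penalty `φ ≥ 0` vanishes exactly on `D`. As `n → ∞` these
factors decrease to the indicator of `D`, so by dominated convergence the unnormalised integrals of
`‖x‖ ^ k` and of `1` both converge to integrals over `D`; dividing is harmless because `D` has
positive measure. A strongly convex potential outgrows every linear function, and this provides the
integrable dominating functions.
-/

section Penalization

variable {α F : Type*} [MeasurableSpace α] [NormedAddCommGroup F] [NormedSpace ℝ F]
  {μ : Measure α} {φ : α → ℝ}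

theorem tendsto_integral_exp_neg_mul_smul_s15 (hφ : Measurable φ) (hφ_nonneg : ∀ x, 0 ≤ φ x)
    {f : α → F} (hf : Integrable f μ) :
    Tendsto (fun t : ℝ => ∫ x, Real.exp (-(t * φ x)) • f x ∂μ) atTop
      (𝓝 (∫ x in {x | φ x = 0}, f x ∂μ)) := by
  have hzeros : MeasurableSet {x | φ x = 0} := hφ (measurableSet_singleton 0)
  rw [← integral_indicator hzeros]
  refine tendsto_integral_filter_of_dominated_convergence (fun x => ‖f x‖) ?_ ?_ hf.norm ?_
  · exact .of_forall fun t =>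
      (by fun_prop : Measurable fun x => Real.exp (-(t * φ x))).aestronglyMeasurable.smul hf.1
  · filter_upwards [eventually_ge_atTop 0] with t ht
    refine .of_forall fun x => ?_
    rw [norm_smul, Real.norm_of_nonneg (Real.exp_pos _).le]
    refine mul_le_of_le_one_left (norm_nonneg _) (Real.exp_le_one_iff.2 ?_)
    exact neg_nonpos.2 (mul_nonneg ht (hφ_nonneg x))
  · refine .of_forall fun x => ?_
    by_cases hx : φ x = 0
    · simp [hx]
    · have hpos : 0 < φ x := (hφ_nonneg x).lt_of_ne' hx
      have hdecay : Tendsto (fun t : ℝ => Real.exp (-(t * φ x))) atTop (𝓝 0) :=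
        Real.tendsto_exp_neg_atTop_nhds_zero.comp (tendsto_id.atTop_mul_const hpos)
      simpa [hx] using hdecay.smul_const (f x)

theorem integral_tilted_eq_inv_smul (ψ : α → ℝ) (h : α → F) :
    ∫ x, h x ∂μ.tilted ψ = (∫ x, Real.exp (ψ x) ∂μ)⁻¹ • ∫ x, Real.exp (ψ x) • h x ∂μ := by
  simp_rw [integral_tilted, div_eq_inv_mul, mul_smul, integral_smul]

theorem tendsto_integral_tilted_sub_mul (hφ : Measurable φ) (hφ_nonneg : ∀ x, 0 ≤ φ x)
    (hφ_zero : μ {x | φ x = 0} ≠ 0) {ψ : α → ℝ} (hψ : Integrable (fun x => Real.exp (ψ x)) μ)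
    {h : α → F} (hh : Integrable h (μ.tilted ψ)) :
    Tendsto (fun t : ℝ => ∫ x, h x ∂μ.tilted (fun x => ψ x - t * φ x)) atTop
      (𝓝 (∫ x, h x ∂(μ.restrict {x | φ x = 0}).tilted ψ)) := by
  have : NeZero (μ.restrict {x | φ x = 0}) := ⟨by simpa using hφ_zero⟩
  have hmass_pos : 0 < ∫ x in {x | φ x = 0}, Real.exp (ψ x) ∂μ := integral_exp_pos hψ.restrict
  have hmass := tendsto_integral_exp_neg_mul_smul_s15 hφ hφ_nonneg hψ
  have hmoment :=
    tendsto_integral_exp_neg_mul_smul_s15 hφ hφ_nonneg ((integrable_tilted_iff hψ h).1 hh)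
  have hexp (t : ℝ) (x : α) : Real.exp (ψ x - t * φ x) =
      Real.exp (-(t * φ x)) * Real.exp (ψ x) := by
    rw [← Real.exp_add, neg_add_eq_sub]
  simp_rw [integral_tilted_eq_inv_smul, hexp, mul_smul]
  exact (hmass.inv₀ hmass_pos.ne').smul hmoment

theorem tilted_restrict_eq_withDensity_indicator {s : Set α} (hs : MeasurableSet s) (ψ : α → ℝ) :
    (μ.restrict s).tilted ψ = μ.withDensity (fun x => ENNReal.ofReal
      (s.indicator (fun y => Real.exp (ψ y)) x / ∫ x in s, Real.exp (ψ x) ∂μ)) := by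
  rw [Measure.tilted, ← withDensity_indicator hs]
  congr 1 with x
  by_cases hx : x ∈ s <;> simp [hx]

end Penalization

theorem tendsto_integral_tilted_infDist_sq_penalty {X F : Type*} [PseudoMetricSpace X]
    [MeasurableSpace X] [OpensMeasurableSpace X] [NormedAddCommGroup F] [NormedSpace ℝ F]
    {μ : Measure X} {D : Set X} (hD : IsClosed D) (hμD : μ D ≠ 0) {g : X → ℝ} {c : ℝ} (hc : 0 < c)
    (hg : Integrable (fun x => Real.exp (-c * g x)) μ)
    {h : X → F} (hh : Integrable h (μ.tilted fun x => -c * g x)) :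
    Tendsto (fun t : ℝ => ∫ x, h x ∂μ.tilted fun x => -c * (g x + t / 2 * infDist x D ^ 2)) atTop
      (𝓝 (∫ x, h x ∂(μ.restrict D).tilted fun x => -c * g x)) := by
  have hzero : {x | c / 2 * infDist x D ^ 2 = 0} = D := by
    ext x
    simp [hc.ne', hD.mem_iff_infDist_zero (nonempty_of_measure_ne_zero hμD)]
  have hlim := tendsto_integral_tilted_sub_mul (φ := fun x => c / 2 * infDist x D ^ 2)
    (by fun_prop) (fun x => by positivity) (by rwa [hzero]) hg hh
  rw [hzero] at hlim
  convert hlim using 5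
  ring

section Growth

variable {E : Type*} [NormedAddCommGroup E] {g : E → ℝ}

theorem exists_forall_mul_norm_le_add_of_strongConvexOn [NormedSpace ℝ E] {m : ℝ} (hm : 0 < m)
    (hg : StrongConvexOn Set.univ m g) (hgc : LowerSemicontinuous g) (a : ℝ) :
    ∃ C, ∀ x, a * ‖x‖ ≤ g x + C := by
  obtain ⟨l, b, hlb, -⟩ := (hg.strictConvexOn hm).convexOn.exists_affine_le_of_lt (𝕜 := ℝ)
    (Set.mem_univ 0) (sub_one_lt (g 0)) isClosed_univ (lowerSemicontinuousOn_univ_iff.2 hgc)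
  have haffine (x : E) : l x + b ≤ g x := hlb ⟨x, Set.mem_univ x⟩
  refine ⟨(a + ‖l‖) ^ 2 / m + g 0 - 2 * b, fun x => ?_⟩
  -- Strong convexity at the midpoint of `0` and `x` adds a quadratic term to the affine minorant.
  have hmid : g ((1 / 2 : ℝ) • x) ≤ g x / 2 + g 0 / 2 - m / 8 * ‖x‖ ^ 2 := by
    have h := hg.2 (Set.mem_univ x) (Set.mem_univ 0) one_half_pos.le one_half_pos.le
      (add_halves 1)
    simp only [smul_zero, add_zero, sub_zero, smul_eq_mul] at h
    linarith
  have hmid_affine : l x / 2 + b ≤ g ((1 / 2 : ℝ) • x) := by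
    have h := haffine ((1 / 2 : ℝ) • x)
    rw [map_smul, smul_eq_mul] at h
    linarith
  have hl : -(‖l‖ * ‖x‖) ≤ l x := neg_le_of_abs_le (l.le_opNorm x)
  have hsq : (a + ‖l‖) * ‖x‖ ≤ m / 4 * ‖x‖ ^ 2 + (a + ‖l‖) ^ 2 / m := by
    have h : 0 ≤ (m / 2 * ‖x‖ - (a + ‖l‖)) ^ 2 / m := by positivity
    field_simp at h ⊢
    linarith
  linarith

theorem integrable_norm_pow_mul_exp_neg [MeasurableSpace E] [BorelSpace E]
    [SecondCountableTopology E] {μ : Measure E} [μ.HasTemperateGrowth]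
    (hg : AEStronglyMeasurable g μ) {C : ℝ} (hgrowth : ∀ x, ‖x‖ ≤ g x + C) (k : ℕ) :
    Integrable (fun x => ‖x‖ ^ k * Real.exp (-g x)) μ := by
  have hdecay (N : ℕ) (x : E) : ‖x‖ ^ N * ‖Real.exp (-g x)‖ ≤ N.factorial * Real.exp C := by
    rw [Real.norm_of_nonneg (Real.exp_pos _).le]
    calc ‖x‖ ^ N * Real.exp (-g x)
        ≤ (N.factorial * Real.exp ‖x‖) * Real.exp (-g x) := by
          gcongr
          exact (div_le_iff₀' (by positivity)).1
            (Real.pow_div_factorial_le_exp _ (norm_nonneg x) N)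
      _ = N.factorial * Real.exp (‖x‖ - g x) := by rw [mul_assoc, ← Real.exp_add, sub_eq_add_neg]
      _ ≤ N.factorial * Real.exp C := by
          gcongr
          linarith [hgrowth x]
  simpa using integrable_of_le_of_pow_mul_le (k := k)
    (fun x => by simpa only [pow_zero, one_mul] using hdecay 0 x)
    (hdecay _) (Real.continuous_exp.comp_aestronglyMeasurable hg.neg)

theorem integrable_norm_pow_mul_exp_neg_mul_of_strongConvexOn [NormedSpace ℝ E]
    [MeasurableSpace E] [BorelSpace E] [SecondCountableTopology E] {μ : Measure E}
    [μ.HasTemperateGrowth] {m : ℝ} (hm : 0 < m) (hg : StrongConvexOn Set.univ m g)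
    (hgc : LowerSemicontinuous g) {c : ℝ} (hc : 0 < c) (k : ℕ) :
    Integrable (fun x => ‖x‖ ^ k * Real.exp (-c * g x)) μ := by
  obtain ⟨C, hC⟩ := exists_forall_mul_norm_le_add_of_strongConvexOn hm hg hgc c⁻¹
  have hgrowth (x : E) : ‖x‖ ≤ c * g x + c * C := by
    rw [← mul_add]
    exact (inv_mul_le_iff₀ hc).1 (hC x)
  simpa only [neg_mul] using integrable_norm_pow_mul_exp_neg
    (hgc.measurable.const_mul c).aestronglyMeasurable hgrowth k

end Growth

theorem penalized_gibbs_second_moment_convergence_general {E : Type*} [NormedAddCommGroup E]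
    [NormedSpace ℝ E] [MeasurableSpace E] [BorelSpace E] [SecondCountableTopology E]
    {μ : Measure E} [μ.HasTemperateGrowth] {D : Set E} (hD : IsClosed D) (hμD : μ D ≠ 0)
    {g : E → ℝ} (hgc : LowerSemicontinuous g) {m : ℝ} (hm : 0 < m)
    (hg : StrongConvexOn Set.univ m g) {c : ℝ} (hc : 0 < c) (k : ℕ) :
    Tendsto (fun t : ℝ => ∫ x, ‖x‖ ^ k ∂μ.tilted fun x => -c * (g x + t / 2 * infDist x D ^ 2))
      atTop (𝓝 (∫ x, ‖x‖ ^ k ∂(μ.restrict D).tilted fun x => -c * g x)) := by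
  have hmoment := integrable_norm_pow_mul_exp_neg_mul_of_strongConvexOn (μ := μ) hm hg hgc hc
  have hmass : Integrable (fun x => Real.exp (-c * g x)) μ := by simpa using hmoment 0
  refine tendsto_integral_tilted_infDist_sq_penalty hD hμD hc hmass ?_
  rw [integrable_tilted_iff hmass]
  simpa only [smul_eq_mul, mul_comm] using hmoment k

/-- Convergence of second moments of the penalized Gibbs measures `π^n` to the
second moment of the truncated Gibbs measure `π` on `D`. -/
theorem penalized_gibbs_second_moment_convergence
    {d : ℕ} (D : Set (EuclideanSpace ℝ (Fin d)))
    (hDne : D.Nonempty) (hDclosed : IsClosed D) (hDconv : Convex ℝ D)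
    (hDint : (interior D).Nonempty)
    (g : EuclideanSpace ℝ (Fin d) → ℝ) (hgc : Continuous g)
    (m : ℝ) (hm : 0 < m) (hgsc : StrongConvexOn Set.univ m g)
    (σ : ℝ) (hσ : 0 < σ)
    (fn : ℕ → EuclideanSpace ℝ (Fin d) → ℝ)
    (hfn : ∀ n x, fn n x = g x + (n : ℝ) / 2 * (infDist x D) ^ 2)
    (Z : ℕ → ℝ)
    (hZ : ∀ n, Z n = ∫ x : EuclideanSpace ℝ (Fin d), Real.exp (-(2 / σ ^ 2) * fn n x))
    (π' : ℕ → Measure (EuclideanSpace ℝ (Fin d)))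
    (hπ' : ∀ n, π' n = volume.withDensity
      (fun x => ENNReal.ofReal (Real.exp (-(2 / σ ^ 2) * fn n x) / Z n)))
    (ZD : ℝ) (hZD : ZD = ∫ x in D, Real.exp (-(2 / σ ^ 2) * g x))
    (π : Measure (EuclideanSpace ℝ (Fin d)))
    (hπ : π = volume.withDensity
      (fun x => ENNReal.ofReal
        (D.indicator (fun y => Real.exp (-(2 / σ ^ 2) * g y)) x / ZD))) :
    Tendsto (fun n : ℕ => ∫ x, ‖x‖ ^ 2 ∂(π' n)) atTop
      (nhds (∫ x, ‖x‖ ^ 2 ∂π)) := by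
  have hπ_tilted : π = (volume.restrict D).tilted fun x => -(2 / σ ^ 2) * g x := by
    rw [hπ, hZD, tilted_restrict_eq_withDensity_indicator hDclosed.measurableSet]
  have hπ'_tilted (n : ℕ) : π' n = volume.tilted
      fun x => -(2 / σ ^ 2) * (g x + (n : ℝ) / 2 * infDist x D ^ 2) := by
    simp_rw [hπ', hZ, hfn, Measure.tilted]
  simp_rw [hπ_tilted, hπ'_tilted]
  exact (penalized_gibbs_second_moment_convergence_general hDclosed
    (Measure.measure_pos_of_nonempty_interior _ hDint).ne' hgc.lowerSemicontinuous hm hgsc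
    (by positivity) 2).comp tendsto_natCast_atTop_atTop
end
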